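/- For all n, m ≥ 1 and every array x = (x_{k,l}) ∈ ℂ^{n×m}, the fourth-order block Toeplitz-plus-Hankel matrix of x is diagonalized: (C_m ⊗ C_n) · btph(x) · (C_mᵀ ⊗ C_nᵀ) = diag(x̂), where x̂ ∈ ℂ^{nm} has entries x̂_{(l−1)n+k} = ∑_{k'=1}^n ∑_{l'=1}^m (M_n)_{k,k'} (M_m)_{l,l'} x_{k',l'} (the mode-wise transform of x by M_n and M_m). -/

import Mathlib

open Matrix Kronecker

noncomputable section

/-- The discrete cosine transform (DCT) matrix `C_n`. -/
def dctMatrix (n : ℕ) : Matrix (Fin n) (Fin n) ℝ :=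
  Matrix.of fun i j =>
    Real.sqrt ((2 - if (i : ℕ) = 0 then (1 : ℝ) else 0) / n) *
      Real.cos ((i : ℕ) * (2 * (j : ℕ) + 1) * Real.pi / (2 * n))

/-- Toeplitz-plus-Hankel selector (0-based indexing). -/
def thSelect {m : ℕ} {β : Type*} [AddCommMonoid β] (B : Fin m → β) (i j : Fin m) : β :=
  B ⟨(((i : ℕ) : ℤ) - ((j : ℕ) : ℤ)).natAbs, by
      have hi := i.isLt; have hj := j.isLt; omega⟩ +
  (if h1 : (i : ℕ) + (j : ℕ) + 2 ≤ m then
      B ⟨(i : ℕ) + (j : ℕ) + 1, by omega⟩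
   else if h2 : (i : ℕ) + (j : ℕ) + 2 = m + 1 then 0
   else
      B ⟨2 * m - 1 - ((i : ℕ) + (j : ℕ)), by
        have hi := i.isLt; have hj := j.isLt; omega⟩)

/-- The Toeplitz-plus-Hankel matrix `tph(a)` of a vector `a ∈ ℂ^n`. -/
def tph {n : ℕ} (a : Fin n → ℂ) : Matrix (Fin n) (Fin n) ℂ :=
  Matrix.of fun i j => thSelect a i j

/-- The fourth-order block Toeplitz-plus-Hankel matrix of `x = (x_{k,l}) ∈ ℂ^{n×m}`:
blocks over the second index `l`, with block `B_l = tph(x_{·,l})`. -/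
def btph4 {n m : ℕ} (x : Fin n → Fin m → ℂ) :
    Matrix (Fin m × Fin n) (Fin m × Fin n) ℂ :=
  Matrix.of fun p q => thSelect (fun l => tph fun k => x k l) p.1 q.1 p.2 q.2

/-- `W_n`: the diagonal matrix whose diagonal is the first column of `C_n`. -/
def Wmat (n : ℕ) : Matrix (Fin n) (Fin n) ℝ :=
  Matrix.diagonal fun i => dctMatrix n i ⟨0, i.pos⟩

/-- `Z_n`: the upshift matrix. -/
def Zmat (n : ℕ) : Matrix (Fin n) (Fin n) ℝ :=
  Matrix.of fun i j => if (i : ℕ) + 1 = (j : ℕ) then 1 else 0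

/-- `M_n = W_n⁻¹ C_n (I_n + Z_n)`. -/
def Mmat (n : ℕ) : Matrix (Fin n) (Fin n) ℝ :=
  (Wmat n)⁻¹ * dctMatrix n * (1 + Zmat n)

/-! The matrix `btph4 x` is a linear combination of Kronecker products of the one-dimensional
matrices `S_s`, the Toeplitz-plus-Hankel matrices of the standard basis vectors `e_s`, so it
suffices that `C_n` diagonalizes each `S_s`. For `s ≠ 0`, the matrix `S_s` acts on a vector
extended to `ℤ` by reflection about `-1/2` and `n - 1/2` as `f ↦ f (· + s) + f (· - s)`; the
rows of `C_n` are samples of cosines having these symmetries, so they are eigenvectors. As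
the first row of `S_s` is column `s` of `I + Z_n`, the eigenvalues can be read off from that row:
they form column `s` of `M_n`. -/

theorem sum_diagonal {ι κ R : Type*} [DecidableEq κ] [AddCommMonoid R] (s : Finset ι)
    (d : ι → κ → R) : ∑ i ∈ s, Matrix.diagonal (d i) = Matrix.diagonal (∑ i ∈ s, d i) :=
  (map_sum (Matrix.diagonalAddMonoidHom κ R) d s).symm

section ToeplitzHankelBasis

variable (R : Type*) [Semiring R] {n : ℕ}

/-- The Toeplitz-plus-Hankel matrix of the `s`-th standard basis vector, over any semiring. -/
def thBasis (s : Fin n) : Matrix (Fin n) (Fin n) R :=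
  Matrix.of (thSelect (Pi.single s 1))

theorem thSelect_eq_sum_thBasis_smul {β : Type*} [AddCommMonoid β] [Module R β]
    (B : Fin n → β) (i j : Fin n) : thSelect B i j = ∑ s, thBasis R s i j • B s := by
  simp only [thBasis, thSelect, Matrix.of_apply, Pi.single_apply]
  split_ifs <;> simp [add_smul, Finset.sum_add_distrib]

theorem thBasis_eq_one {s : Fin n} (hs : (s : ℕ) = 0) : thBasis R s = 1 := by
  ext i j
  simp only [thBasis, thSelect, Matrix.of_apply, Pi.single_apply, Matrix.one_apply, Fin.ext_iff]
  split_ifs <;> first | omega | simp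

theorem thBasis_zero_apply (s j : Fin n) :
    thBasis ℝ s ⟨0, s.pos⟩ j = (1 + Zmat n) j s := by
  simp only [thBasis, thSelect, Zmat, Matrix.of_apply, Pi.single_apply, Matrix.add_apply,
    Matrix.one_apply, Fin.ext_iff]
  split_ifs <;> first | omega | simp

/-- The representative in `Fin n` of an integer `z ∈ [-n, 2n)` under reflection about the
half-integers `-1/2` and `n - 1/2`, as in the symmetric extension of a vector of length `n`. -/
def mirror (z : ℤ) (hz : -n ≤ z ∧ z < 2 * n) : Fin n :=
  ⟨(if z < 0 then -1 - z else if z < n then z else 2 * n - 1 - z).toNat, by split_ifs <;> omega⟩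

theorem apply_mirror {α : Type*} {f : ℤ → α} (hneg : ∀ z, f (-1 - z) = f z)
    (hsub : ∀ z, f (2 * n - 1 - z) = f z) (z : ℤ) (hz : -n ≤ z ∧ z < 2 * n) :
    f (mirror z hz : Fin n) = f z := by
  rw [mirror, Fin.val_mk, Int.toNat_of_nonneg (by split_ifs <;> omega)]
  split_ifs
  exacts [hneg z, rfl, hsub z]

variable {R}

theorem thBasis_row_eq_single_add_single {s : Fin n} (hs : (s : ℕ) ≠ 0) (i : Fin n) :
    thBasis R s i = Pi.single (mirror (i + s) (by omega)) 1 +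
      Pi.single (mirror (i - s) (by omega)) 1 := by
  ext j
  simp only [thBasis, thSelect, mirror, Matrix.of_apply, Pi.add_apply, Pi.single_apply,
    Fin.ext_iff]
  split_ifs <;> first | omega | simp

theorem thBasis_map {S : Type*} [Semiring S] (φ : R →+* S) (s : Fin n) :
    (thBasis R s).map φ = thBasis S s := by
  ext i j
  simp only [thBasis, thSelect, Matrix.map_apply, Matrix.of_apply, Pi.single_apply]
  split_ifs <;> simp

theorem thBasis_mulVec_apply {f : ℤ → R} (hneg : ∀ z, f (-1 - z) = f z)
    (hsub : ∀ z, f (2 * n - 1 - z) = f z) {s : Fin n} (hs : (s : ℕ) ≠ 0) (i : Fin n) :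
    (thBasis R s *ᵥ fun j => f j) i = f (i + s) + f (i - s) := by
  rw [Matrix.mulVec, thBasis_row_eq_single_add_single hs, add_dotProduct,
    single_one_dotProduct, single_one_dotProduct, apply_mirror hneg hsub, apply_mirror hneg hsub]

end ToeplitzHankelBasis

theorem btph4_eq_sum_smul_kronecker {n m : ℕ} (x : Fin n → Fin m → ℂ) :
    btph4 x = ∑ k, ∑ l, x k l • (thBasis ℂ l ⊗ₖ thBasis ℂ k) := by
  ext p q
  simp only [btph4, tph, Matrix.of_apply, thSelect_eq_sum_thBasis_smul ℂ, Matrix.sum_apply,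
    Matrix.smul_apply, Matrix.kroneckerMap_apply, smul_eq_mul, Finset.mul_sum]
  rw [Finset.sum_comm]
  exact Finset.sum_congr rfl fun k _ => Finset.sum_congr rfl fun l _ => by ring

section DCT

open Polynomial.Chebyshev

variable {n : ℕ}

/-- The `k`-th cosine of the DCT of length `n`, as a function on `ℤ`; row `k` of `dctMatrix n`
consists of its values at `0, …, n - 1` up to normalization. -/
def dctMode (n k : ℕ) (z : ℤ) : ℝ :=
  Real.cos (k * (2 * z + 1) * Real.pi / (2 * n))

theorem dctMode_neg_one_sub (n k : ℕ) (z : ℤ) : dctMode n k (-1 - z) = dctMode n k z := by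
  rw [dctMode, ← Real.cos_neg, dctMode]
  push_cast
  ring_nf

theorem dctMode_two_mul_sub_one_sub (n k : ℕ) (z : ℤ) :
    dctMode n k (2 * n - 1 - z) = dctMode n k z := by
  rcases eq_or_ne n 0 with rfl | hn
  · simp [dctMode]
  · rw [dctMode, dctMode, ← Real.cos_nat_mul_two_pi_sub _ k]
    congr 1
    push_cast
    field

theorem dctMode_add_add_dctMode_sub (n k : ℕ) (z s : ℤ) :
    dctMode n k (z + s) + dctMode n k (z - s) =
      2 * Real.cos (k * s * Real.pi / n) * dctMode n k z := by
  rw [dctMode, dctMode, dctMode, mul_right_comm, Real.two_mul_cos_mul_cos,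
    ← Real.cos_neg (_ - _)]
  push_cast
  ring_nf

theorem dctMode_zero_pos {k : ℕ} (hkn : k < n) : 0 < dctMode n k 0 := by
  have hk : (k : ℝ) < n := by exact_mod_cast hkn
  have hn : (0 : ℝ) < n := k.cast_nonneg.trans_lt hk
  have hlt : (k : ℝ) * Real.pi / (2 * n) < Real.pi / 2 := by
    rw [div_lt_div_iff₀ (by positivity) two_pos]
    nlinarith [Real.pi_pos]
  have hnonneg : 0 ≤ (k : ℝ) * Real.pi / (2 * n) := by positivity
  simpa [dctMode] using Real.cos_pos_of_mem_Ioo ⟨by linarith [Real.pi_pos], hlt⟩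

/-- The samples `dctMode n k j` are the values of `T_k` at the roots of `T_n`, and Gauss–Chebyshev
quadrature at these roots is exact in degree `k + l < 2 * n`. -/
theorem integral_T_mul_T_eq_sum_dctMode (k l : Fin n) :
    ∫ x, (T ℝ k).eval x * (T ℝ l).eval x ∂measureT =
      Real.pi / n * ∑ j : Fin n, dctMode n k j * dctMode n l j := by
  have hdeg : (T ℝ k * T ℝ l).degree < 2 * n := by
    rw [Polynomial.degree_mul, degree_T, degree_T]
    exact_mod_cast (by omega : (k : ℕ) + l < 2 * n)
  have hnode (k j : ℕ) :
      (T ℝ k).eval (Real.cos ((2 * j + 1) / (2 * n) * Real.pi)) = dctMode n k j := by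
    rw [T_real_cos, dctMode]
    push_cast
    ring_nf
  simp_rw [← Polynomial.eval_mul]
  rw [integral_eq_sumZeroes k.pos.ne' hdeg, sumZeroes, ← Fin.sum_univ_eq_sum_range]
  simp only [Polynomial.eval_mul, hnode]

theorem sum_dctMode_mul_dctMode_of_ne {k l : Fin n} (h : k ≠ l) :
    ∑ j : Fin n, dctMode n k j * dctMode n l j = 0 := by
  have hn : (n : ℝ) ≠ 0 := by exact_mod_cast k.pos.ne'
  have hint := integral_T_mul_T_eq_sum_dctMode k l
  rw [integral_eval_T_real_mul_eval_T_real_measureT_of_ne (Fin.val_ne_of_ne h)] at hint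
  exact (mul_eq_zero.mp hint.symm).resolve_left (div_ne_zero Real.pi_ne_zero hn)

theorem sum_dctMode_mul_self (k : Fin n) :
    ∑ j : Fin n, dctMode n k j * dctMode n k j =
      n / (2 - if (k : ℕ) = 0 then (1 : ℝ) else 0) := by
  have hn : (n : ℝ) ≠ 0 := by exact_mod_cast k.pos.ne'
  have hint := integral_T_mul_T_eq_sum_dctMode k k
  have hnorm : ∫ x, (T ℝ k).eval x * (T ℝ k).eval x ∂measureT =
      Real.pi / (2 - if (k : ℕ) = 0 then (1 : ℝ) else 0) := by
    split_ifs with hk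
    · rw [hk, Nat.cast_zero, integral_eval_T_real_mul_self_measureT_zero]
      norm_num
    · rw [integral_T_real_mul_self_measureT_of_ne_zero hk, sub_zero]
  rw [hnorm, div_mul_eq_mul_div, eq_div_iff hn, div_mul_eq_mul_div, mul_div_assoc] at hint
  exact (mul_left_cancel₀ Real.pi_ne_zero hint).symm

/-- The factor normalizing the `k`-th cosine in the DCT of length `n`. -/
def dctScale (n k : ℕ) : ℝ :=
  √((2 - if k = 0 then (1 : ℝ) else 0) / n)

theorem dctScale_pos (hn : 0 < n) (k : ℕ) : 0 < dctScale n k := by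
  refine Real.sqrt_pos.mpr (div_pos ?_ (Nat.cast_pos.mpr hn))
  split_ifs <;> norm_num

theorem dctMatrix_apply (k j : Fin n) : dctMatrix n k j = dctScale n k * dctMode n k j := by
  simp [dctMatrix, dctScale, dctMode]

theorem dctMatrix_zero_pos (k : Fin n) : 0 < dctMatrix n k ⟨0, k.pos⟩ := by
  rw [dctMatrix_apply]
  exact mul_pos (dctScale_pos k.pos k) (dctMode_zero_pos k.isLt)

theorem dctMatrix_mul_transpose (n : ℕ) : dctMatrix n * (dctMatrix n)ᵀ = 1 := by
  ext k l
  have hentry : (dctMatrix n * (dctMatrix n)ᵀ) k l =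
      dctScale n k * dctScale n l * ∑ j : Fin n, dctMode n k j * dctMode n l j := by
    simp only [Matrix.mul_apply, Matrix.transpose_apply, dctMatrix_apply, Finset.mul_sum,
      mul_mul_mul_comm]
  rw [hentry]
  rcases eq_or_ne k l with rfl | hkl
  · have hscale := dctScale_pos k.pos k
    rw [dctScale, Real.sqrt_pos] at hscale
    rw [dctScale, Real.mul_self_sqrt hscale.le, sum_dctMode_mul_self, Matrix.one_apply_eq,
      ← inv_div _ (n : ℝ), mul_inv_cancel₀ hscale.ne']
  · rw [sum_dctMode_mul_dctMode_of_ne hkl, mul_zero, Matrix.one_apply_ne hkl]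

theorem thBasis_mul_dctMatrix_transpose (s : Fin n) :
    thBasis ℝ s * (dctMatrix n)ᵀ = (dctMatrix n)ᵀ * Matrix.diagonal fun k : Fin n =>
      if (s : ℕ) = 0 then 1 else 2 * Real.cos (k * s * Real.pi / n) := by
  split_ifs with hs
  · simp [thBasis_eq_one ℝ hs]
  · ext i k
    have hrow : dctMatrix n k = dctScale n k • fun j : Fin n => dctMode n k j :=
      funext (dctMatrix_apply k)
    calc (thBasis ℝ s * (dctMatrix n)ᵀ) i k
      _ = (thBasis ℝ s *ᵥ dctMatrix n k) i := rfl
      _ = dctScale n k * (dctMode n k (i + s) + dctMode n k (i - s)) := by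
        rw [hrow, Matrix.mulVec_smul, Pi.smul_apply, smul_eq_mul,
          thBasis_mulVec_apply (dctMode_neg_one_sub n k) (dctMode_two_mul_sub_one_sub n k) hs]
      _ = dctMatrix n k i * (2 * Real.cos (k * s * Real.pi / n)) := by
        rw [dctMode_add_add_dctMode_sub, dctMatrix_apply, Int.cast_natCast]
        ring
      _ = _ := by rw [Matrix.mul_diagonal, Matrix.transpose_apply]

theorem Wmat_inv (n : ℕ) :
    (Wmat n)⁻¹ = Matrix.diagonal fun k => (dctMatrix n k ⟨0, k.pos⟩)⁻¹ := by
  refine Matrix.inv_eq_left_inv ?_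
  simp only [Wmat, Matrix.diagonal_mul_diagonal, inv_mul_cancel₀ (dctMatrix_zero_pos _).ne',
    Matrix.diagonal_one]

theorem Mmat_col_eq_of_thBasis_mul {s : Fin n} {d : Fin n → ℝ}
    (h : thBasis ℝ s * (dctMatrix n)ᵀ = (dctMatrix n)ᵀ * Matrix.diagonal d) :
    (Mmat n).col s = d := by
  ext k
  have hfirst : (dctMatrix n * (1 + Zmat n)) k s = dctMatrix n k ⟨0, k.pos⟩ * d k := by
    calc (dctMatrix n * (1 + Zmat n)) k s
      _ = (thBasis ℝ s * (dctMatrix n)ᵀ) ⟨0, k.pos⟩ k := by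
        simp only [Matrix.mul_apply, Matrix.transpose_apply, thBasis_zero_apply, mul_comm]
      _ = _ := by rw [h, Matrix.mul_diagonal, Matrix.transpose_apply]
  rw [Matrix.col_apply, Mmat, Wmat_inv, Matrix.mul_assoc, Matrix.diagonal_mul, hfirst,
    inv_mul_cancel_left₀ (dctMatrix_zero_pos k).ne']

theorem dctMatrix_mul_thBasis_mul_transpose (s : Fin n) :
    dctMatrix n * thBasis ℝ s * (dctMatrix n)ᵀ = Matrix.diagonal ((Mmat n).col s) := by
  have h := thBasis_mul_dctMatrix_transpose s
  rw [Mmat_col_eq_of_thBasis_mul h, Matrix.mul_assoc, h, ← Matrix.mul_assoc,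
    dctMatrix_mul_transpose, Matrix.one_mul]

theorem dctMatrix_map_mul_thBasis_mul_transpose (s : Fin n) :
    (dctMatrix n).map Complex.ofReal * thBasis ℂ s * ((dctMatrix n).map Complex.ofReal)ᵀ =
      Matrix.diagonal fun k => (Mmat n k s : ℂ) := by
  have h := congrArg (fun A => A.map Complex.ofRealHom) (dctMatrix_mul_thBasis_mul_transpose s)
  simp only [Matrix.map_mul, thBasis_map, Matrix.diagonal_map (map_zero Complex.ofRealHom)] at h
  exact h

theorem dctMatrix_kronecker_mul_thBasis_kronecker_mul_transpose {m : ℕ} (l : Fin m) (k : Fin n) :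
    ((dctMatrix m).map Complex.ofReal ⊗ₖ (dctMatrix n).map Complex.ofReal) *
        (thBasis ℂ l ⊗ₖ thBasis ℂ k) *
        (((dctMatrix m).map Complex.ofReal)ᵀ ⊗ₖ ((dctMatrix n).map Complex.ofReal)ᵀ) =
      Matrix.diagonal fun p => (Mmat m p.1 l * Mmat n p.2 k : ℂ) := by
  simp only [← Matrix.mul_kronecker_mul, dctMatrix_map_mul_thBasis_mul_transpose,
    Matrix.diagonal_kronecker_diagonal]

end DCT

/-- For all `n, m ≥ 1` and `x = (x_{k,l}) ∈ ℂ^{n×m}`: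
`(C_m ⊗ C_n) · btph(x) · (C_mᵀ ⊗ C_nᵀ) = diag(x̂)`, where
`x̂_{k,l} = ∑_{k',l'} (M_n)_{k,k'} (M_m)_{l,l'} x_{k',l'}`. -/
theorem dct_diagonalizes_btph4 (n m : ℕ) (hn : 1 ≤ n) (hm : 1 ≤ m)
    (x : Fin n → Fin m → ℂ) :
    ((dctMatrix m).map (Complex.ofReal) ⊗ₖ (dctMatrix n).map (Complex.ofReal)) * btph4 x *
        (((dctMatrix m).map (Complex.ofReal))ᵀ ⊗ₖ ((dctMatrix n).map (Complex.ofReal))ᵀ)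
      = Matrix.diagonal (fun p : Fin m × Fin n =>
          ∑ k' : Fin n, ∑ l' : Fin m,
            ((Mmat n p.2 k' * Mmat m p.1 l' : ℝ) : ℂ) * x k' l') := by
  simp only [btph4_eq_sum_smul_kronecker, Matrix.mul_sum, Matrix.sum_mul, Matrix.mul_smul,
    Matrix.smul_mul, dctMatrix_kronecker_mul_thBasis_kronecker_mul_transpose,
    ← Matrix.diagonal_smul, sum_diagonal]
  congr 1
  ext p
  simp only [Finset.sum_apply, Pi.smul_apply, smul_eq_mul, Complex.ofReal_mul]
  exact Finset.sum_congr rfl fun k _ => Finset.sum_congr rfl fun l _ => by ring
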